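/- arXiv:2107.00504 — 4 statements merged into one kernel-verified Lean document; each statement's English description precedes it below -/
import Mathlib

section
/- Let δt > 0 and let (u^n), (ũ^n), (λ^n), (f^n) be sequences of functions from S to ℝ (f^n playing the role of the discrete operator L_h^n applied to ũ^{n+1}). Suppose that for every n ≥ 0 and every z ∈ S: (i) (ũ^{n+1}(z) − u^n(z))/δt + f^n(z) = 0; (ii) (u^{n+1}(z) − ũ^{n+1}(z))/δt = λ^{n+1}(z); (iii) λ^{n+1}(z) ≥ 0, u^{n+1}(z) ≥ 0, and λ^{n+1}(z)·u^{n+1}(z) = 0. Then for every m ≥ 1 the energy identity holds: ‖u^m‖² + ∑_{n=0}^{m−1} ( ‖ũ^{n+1} − u^n‖² + δt²‖λ^{n+1}‖² ) + 2δt ∑_{n=0}^{m−1} [f^n, ũ^{n+1}] = ‖u^0‖². -/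
/-!
Both half steps are implicit Euler steps `v - u = τ g`, and polarization turns such a step into
`‖v‖² + ‖v - u‖² = ‖u‖² + 2τ [g, v]`. For the predictor `g = -f`, which gives the term in `[f, ũ]`.
For the corrector `g = λ`, and complementarity makes `[λ, u]` vanish, so the multiplier contributes
only `‖v - u‖² = τ²‖λ‖²`. Adding the two identities eliminates the norm of the predictor, and the
sum over the time steps telescopes.
-/

open Finset

section BilinForm

variable {R M : Type*} [CommRing R] [AddCommGroup M] [Module R M] {B : LinearMap.BilinForm R M}

theorem apply_self_add_apply_sub_self (hB : B.IsSymm) (u v : M) :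
    B v v + B (v - u) (v - u) = B u u + 2 * B (v - u) v := by
  simp only [map_sub, LinearMap.sub_apply]
  linear_combination hB.eq u v

theorem implicit_euler_energy (hB : B.IsSymm) {τ : R} {u v g : M} (hstep : v - u = τ • g) :
    B v v + B (v - u) (v - u) = B u u + 2 * τ * B g v := by
  have hwork : B (v - u) v = τ * B g v := by
    rw [hstep, map_smul, LinearMap.smul_apply, smul_eq_mul]
  rw [apply_self_add_apply_sub_self hB, hwork, mul_assoc]

theorem implicit_euler_energy_of_orthogonal (hB : B.IsSymm) {τ : R} {u v g : M}
    (hstep : v - u = τ • g) (horth : B g v = 0) :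
    B v v + τ ^ 2 * B g g = B u u := by
  have hincrement : B (v - u) (v - u) = τ ^ 2 * B g g := by
    simp only [hstep, map_smul, LinearMap.smul_apply, smul_eq_mul]
    ring
  rw [← hincrement, implicit_euler_energy hB hstep, horth, mul_zero, add_zero]

theorem predictor_corrector_energy (hB : B.IsSymm) {τ : R} {u p v f lam : M}
    (hpred : p - u = τ • -f) (hcorr : v - p = τ • lam) (horth : B lam v = 0) :
    (B (p - u) (p - u) + τ ^ 2 * B lam lam) + 2 * τ * B f p = B u u - B v v := by
  have hp : B p p + B (p - u) (p - u) = B u u - 2 * τ * B f p := by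
    rw [implicit_euler_energy hB hpred, map_neg, LinearMap.neg_apply, mul_neg, sub_eq_add_neg]
  have hv : B v v + τ ^ 2 * B lam lam = B p p := implicit_euler_energy_of_orthogonal hB hcorr horth
  linear_combination hp + hv

theorem first_order_energy_identity_general (hB : B.IsSymm) {τ : R} {u ut lam f : ℕ → M}
    (hpred : ∀ n, ut (n + 1) - u n = τ • -f n)
    (hcorr : ∀ n, u (n + 1) - ut (n + 1) = τ • lam (n + 1))
    (horth : ∀ n, B (lam (n + 1)) (u (n + 1)) = 0) (m : ℕ) :
    B (u m) (u m)
      + ∑ n ∈ range m, (B (ut (n + 1) - u n) (ut (n + 1) - u n)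
          + τ ^ 2 * B (lam (n + 1)) (lam (n + 1)))
      + 2 * τ * ∑ n ∈ range m, B (f n) (ut (n + 1))
    = B (u 0) (u 0) := by
  rw [add_assoc, mul_sum, ← sum_add_distrib,
    sum_congr rfl fun n _ => predictor_corrector_energy hB (hpred n) (hcorr n) (horth n),
    sum_range_sub' fun n => B (u n) (u n), add_sub_cancel]

end BilinForm

section WeightedForm

variable {S R : Type*} [Fintype S] [CommRing R]

/-- The discrete inner product `[u, v] = ∑ z, w z * u z * v z` with weights `w`, encoded
as a bilinear form so that the energy argument applies to it without coordinates. -/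
def weightedForm (w : S → R) : LinearMap.BilinForm R (S → R) :=
  ∑ z, w z • LinearMap.BilinForm.linMulLin (LinearMap.proj z) (LinearMap.proj z)

theorem weightedForm_apply (w u v : S → R) : weightedForm w u v = ∑ z, w z * u z * v z := by
  simp [weightedForm, LinearMap.sum_apply, mul_assoc]

theorem weightedForm_isSymm (w : S → R) : (weightedForm w).IsSymm where
  eq u v := by simp [weightedForm_apply, mul_right_comm]

theorem weightedForm_eq_zero_of_mul_eq_zero (w : S → R) {u v : S → R} (h : ∀ z, u z * v z = 0) :
    weightedForm w u v = 0 := by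
  simp [weightedForm_apply, mul_assoc, h]

end WeightedForm

theorem eq_smul_of_forall_div_eq {S K : Type*} [CommGroupWithZero K] {τ : K} (hτ : τ ≠ 0)
    {d g : S → K} (h : ∀ z, d z / τ = g z) : d = τ • g := by
  ext z
  rw [Pi.smul_apply, smul_eq_mul, ← h z, mul_div_cancel₀ _ hτ]

/-- Theorem 3.1 (energy identity) for the first-order operator-splitting
positivity-preserving scheme: `ut` is the predictor ũ, `lam` the Lagrange
multiplier λ, and `f n` plays the role of `L_h^n ũ^{n+1}`. -/
theorem first_order_energy_identity
    {S : Type*} [Fintype S] [Nonempty S] (w : S → ℝ) (hw : ∀ z, 0 < w z)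
    (δt : ℝ) (hδt : 0 < δt)
    (u ut lam f : ℕ → S → ℝ)
    (hstep1 : ∀ n z, (ut (n + 1) z - u n z) / δt + f n z = 0)
    (hstep2 : ∀ n z, (u (n + 1) z - ut (n + 1) z) / δt = lam (n + 1) z)
    (hKKT : ∀ n z, 0 ≤ lam (n + 1) z ∧ 0 ≤ u (n + 1) z ∧
      lam (n + 1) z * u (n + 1) z = 0)
    (m : ℕ) (hm : 1 ≤ m) :
    (∑ z, w z * u m z * u m z)
      + (∑ n ∈ Finset.range m,
          ((∑ z, w z * (ut (n + 1) z - u n z) * (ut (n + 1) z - u n z))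
            + δt ^ 2 * ∑ z, w z * lam (n + 1) z * lam (n + 1) z))
      + 2 * δt * (∑ n ∈ Finset.range m, ∑ z, w z * f n z * ut (n + 1) z)
    = ∑ z, w z * u 0 z * u 0 z := by
  have hpred (n : ℕ) : ut (n + 1) - u n = δt • -f n :=
    eq_smul_of_forall_div_eq hδt.ne' fun z => eq_neg_of_add_eq_zero_left (hstep1 n z)
  have hcorr (n : ℕ) : u (n + 1) - ut (n + 1) = δt • lam (n + 1) :=
    eq_smul_of_forall_div_eq hδt.ne' (hstep2 n)
  have hcompl (n : ℕ) : weightedForm w (lam (n + 1)) (u (n + 1)) = 0 :=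
    weightedForm_eq_zero_of_mul_eq_zero w fun z => (hKKT n z).2.2
  simpa only [weightedForm_apply, Pi.sub_apply] using
    first_order_energy_identity_general (weightedForm_isSymm w) hpred hcorr hcompl m
end

section
/- Let δt > 0, let (u^n), (ũ^n), (λ^n), (f^n) be sequences of functions from S to ℝ, and let (ξ^n) be a sequence of real scalars. Suppose that for every n ≥ 0 and z ∈ S: (i) (ũ^{n+1}(z) − u^n(z))/δt + f^n(z) = 0; (ii) (u^{n+1}(z) − ũ^{n+1}(z))/δt = λ^{n+1}(z) + ξ^{n+1}; (iii) λ^{n+1}(z) ≥ 0, u^{n+1}(z) ≥ 0, λ^{n+1}(z)·u^{n+1}(z) = 0; (iv) mass conservation [u^{n+1}, 1] = [u^n, 1]; and (v) [f^n, 1] = 0. Then for every m ≥ 1: ‖u^m‖² + ∑_{n=0}^{m−1} ( ‖ũ^{n+1} − u^n‖² + δt²‖λ^{n+1} + ξ^{n+1}‖² ) + 2δt ∑_{n=0}^{m−1} [f^n, ũ^{n+1}] ≤ ‖u^0‖². -/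
open Finset

/-!
Write `μ = λ + ξ • 1` for the total multiplier. The polarization identity
`‖x‖² + ‖x - y‖² = ‖y‖² + 2 [x - y, x]`, applied to the predictor and to the corrector, gives

  `‖uⁿ⁺¹‖² + ‖ũⁿ⁺¹ - uⁿ‖² + δt² ‖μ‖² + 2 δt [fⁿ, ũⁿ⁺¹] = ‖uⁿ‖² + 2 δt [μ, uⁿ⁺¹]`.

Complementarity reduces `[μ, uⁿ⁺¹]` to `ξ [1, uⁿ⁺¹]`. Mass conservation forces `[μ, 1] = 0`,
so `ξ ‖1‖² = -[λ, 1] ≤ 0`; hence the last term is nonpositive and the inequalities telescope.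
-/

section EnergyIdentity

variable {R V : Type*} [CommRing R] [AddCommGroup V] [Module R V] {B : LinearMap.BilinForm R V}

lemma apply_self_add_apply_sub_self_of_isSymm (hB : B.IsSymm) (x y : V) :
    B x x + B (x - y) (x - y) = B y y + 2 * B (x - y) x := by
  simp only [map_sub, LinearMap.sub_apply, hB.eq y x]
  ring

lemma energy_identity_of_predictor_corrector (hB : B.IsSymm) {δt : R} {u ut u' f μ : V}
    (hpred : ut - u = -(δt • f)) (hcorr : u' - ut = δt • μ) :
    B u' u' + (B (ut - u) (ut - u) + δt ^ 2 * B μ μ) + 2 * δt * B f ut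
      = B u u + 2 * δt * B μ u' := by
  have predictor : B ut ut + B (ut - u) (ut - u) = B u u - 2 * δt * B f ut := by
    rw [apply_self_add_apply_sub_self_of_isSymm hB, hpred]
    simp only [map_neg, map_smul, LinearMap.neg_apply, LinearMap.smul_apply, smul_eq_mul]
    ring
  have corrector : B u' u' + δt ^ 2 * B μ μ = B ut ut + 2 * δt * B μ u' := by
    have h := apply_self_add_apply_sub_self_of_isSymm hB u' ut
    simp only [hcorr, map_smul, LinearMap.smul_apply, smul_eq_mul] at h
    linear_combination h
  linear_combination predictor + corrector

lemma multiplier_apply_eq_zero_of_mass_conserved [NoZeroDivisors R] {δt : R} (hδt : δt ≠ 0)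
    {u ut u' f μ e : V} (hpred : ut - u = -(δt • f)) (hcorr : u' - ut = δt • μ)
    (hmass : B u' e = B u e) (hf : B f e = 0) : B μ e = 0 := by
  have balance : u' - u = δt • μ - δt • f := by
    rw [← sub_add_sub_cancel u' ut u, hcorr, hpred, ← sub_eq_add_neg]
  have h : B (u' - u) e = 0 := by rw [map_sub, LinearMap.sub_apply, hmass, sub_self]
  simpa [balance, hf, hδt] using h

end EnergyIdentity

section MultiplierSign

variable {R V : Type*} [CommRing R] [LinearOrder R] [IsStrictOrderedRing R]
  [AddCommGroup V] [Module R V] {B : LinearMap.BilinForm R V}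

lemma scalar_multiplier_nonpos {l e : V} {ξ : R} (he : 0 < B e e) (hl : 0 ≤ B l e)
    (hmean : B (l + ξ • e) e = 0) : ξ ≤ 0 := by
  simp only [map_add, map_smul, LinearMap.add_apply, LinearMap.smul_apply, smul_eq_mul] at hmean
  exact nonpos_of_mul_nonpos_left (by linarith) he

lemma multiplier_apply_nonpos (hB : B.IsSymm) {l v e : V} {ξ : R} (he : 0 < B e e)
    (hl : 0 ≤ B l e) (hv : 0 ≤ B v e) (hlv : B l v = 0) (hmean : B (l + ξ • e) e = 0) :
    B (l + ξ • e) v ≤ 0 := by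
  have h : B (l + ξ • e) v = ξ * B v e := by simp [hlv, hB.eq e v]
  exact h.trans_le (mul_nonpos_of_nonpos_of_nonneg (scalar_multiplier_nonpos he hl hmean) hv)

lemma energy_le_of_predictor_corrector (hB : B.IsSymm) {δt : R} (hδt : 0 < δt)
    {u ut u' f l e : V} {ξ : R} (he : 0 < B e e)
    (hpred : ut - u = -(δt • f)) (hcorr : u' - ut = δt • (l + ξ • e))
    (hl : 0 ≤ B l e) (hu' : 0 ≤ B u' e) (hlu' : B l u' = 0)
    (hmass : B u' e = B u e) (hf : B f e = 0) :
    B u' u' + (B (ut - u) (ut - u) + δt ^ 2 * B (l + ξ • e) (l + ξ • e)) + 2 * δt * B f ut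
      ≤ B u u := by
  have hmean : B (l + ξ • e) e = 0 :=
    multiplier_apply_eq_zero_of_mass_conserved hδt.ne' hpred hcorr hmass hf
  have hwork : 2 * δt * B (l + ξ • e) u' ≤ 0 :=
    mul_nonpos_of_nonneg_of_nonpos (by positivity)
      (multiplier_apply_nonpos hB he hl hu' hlu' hmean)
  rw [energy_identity_of_predictor_corrector hB hpred hcorr]
  exact add_le_of_nonpos_right hwork

end MultiplierSign

theorem first_order_mass_conserving_stability_general
    {𝕜 V : Type*} [Field 𝕜] [LinearOrder 𝕜] [IsStrictOrderedRing 𝕜] [AddCommGroup V] [Module 𝕜 V]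
    {B : LinearMap.BilinForm 𝕜 V} (hB : B.IsSymm) {e : V} (he : 0 < B e e)
    {δt : 𝕜} (hδt : 0 < δt) {u ut lam f : ℕ → V} {ξ : ℕ → 𝕜}
    (hstep1 : ∀ n, δt⁻¹ • (ut (n + 1) - u n) + f n = 0)
    (hstep2 : ∀ n, δt⁻¹ • (u (n + 1) - ut (n + 1)) = lam (n + 1) + ξ (n + 1) • e)
    (hlam : ∀ n, 0 ≤ B (lam (n + 1)) e) (hu : ∀ n, 0 ≤ B (u (n + 1)) e)
    (hcompl : ∀ n, B (lam (n + 1)) (u (n + 1)) = 0)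
    (hmass : ∀ n, B (u (n + 1)) e = B (u n) e) (hf : ∀ n, B (f n) e = 0) (m : ℕ) :
    B (u m) (u m)
      + (∑ n ∈ range m,
          (B (ut (n + 1) - u n) (ut (n + 1) - u n)
            + δt ^ 2 * B (lam (n + 1) + ξ (n + 1) • e) (lam (n + 1) + ξ (n + 1) • e)))
      + 2 * δt * (∑ n ∈ range m, B (f n) (ut (n + 1)))
    ≤ B (u 0) (u 0) := by
  have hpred (n : ℕ) : ut (n + 1) - u n = -(δt • f n) := by
    rw [← smul_neg, ← inv_smul_eq_iff₀ hδt.ne']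
    exact eq_neg_of_add_eq_zero_left (hstep1 n)
  have hcorr (n : ℕ) : u (n + 1) - ut (n + 1) = δt • (lam (n + 1) + ξ (n + 1) • e) :=
    (inv_smul_eq_iff₀ hδt.ne').mp (hstep2 n)
  have hdecay (n : ℕ) := energy_le_of_predictor_corrector hB hδt he (hpred n) (hcorr n)
    (hlam n) (hu n) (hcompl n) (hmass n) (hf n)
  have htelescope := sum_le_sum fun n (_ : n ∈ range m) =>
    le_sub_iff_add_le'.mpr ((add_assoc _ _ _).symm.trans_le (hdecay n))
  rw [sum_range_sub' fun n => B (u n) (u n), sum_add_distrib, ← mul_sum] at htelescope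
  linarith

section WeightedDotProduct

variable {R S : Type*} [Fintype S]

/-- The discrete inner product `[u, v] = ∑ z, w z * u z * v z` with weights `w`, as a bilinear
form; it is the dot product of `w * u` and `v`. -/
def weightedDotProduct [CommSemiring R] (w : S → R) : LinearMap.BilinForm R (S → R) :=
  LinearMap.BilinForm.compLeft (dotProductBilin R R) (LinearMap.mulLeft R w)

lemma weightedDotProduct_apply [CommSemiring R] (w u v : S → R) :
    weightedDotProduct w u v = ∑ z, w z * u z * v z :=
  rfl

lemma weightedDotProduct_isSymm [CommSemiring R] (w : S → R) : (weightedDotProduct w).IsSymm where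
  eq u v := by simp only [weightedDotProduct_apply, mul_right_comm]

lemma weightedDotProduct_nonneg [CommSemiring R] [PartialOrder R] [IsOrderedRing R] {w u v : S → R}
    (hw : 0 ≤ w) (hu : 0 ≤ u) (hv : 0 ≤ v) : 0 ≤ weightedDotProduct w u v :=
  dotProduct_nonneg_of_nonneg (mul_nonneg hw hu) hv

lemma weightedDotProduct_one_one_pos [Nonempty S] [CommSemiring R] [PartialOrder R]
    [IsOrderedCancelAddMonoid R] {w : S → R} (hw : ∀ z, 0 < w z) :
    0 < weightedDotProduct w 1 1 := by
  simpa [weightedDotProduct_apply] using sum_pos (fun z _ => hw z) univ_nonempty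

lemma weightedDotProduct_eq_zero_of_mul_eq_zero [CommSemiring R] (w : S → R) {u v : S → R}
    (huv : u * v = 0) : weightedDotProduct w u v = 0 := by
  simp only [weightedDotProduct_apply, mul_assoc, ← Pi.mul_apply u v, huv, Pi.zero_apply,
    mul_zero, sum_const_zero]

end WeightedDotProduct

/-- Theorem 3.2: stability of the first-order positivity-preserving scheme with
the additional scalar Lagrange multiplier `ξ^{n+1}` enforcing mass conservation.
Here `ut` is the predictor ũ, `lam` the pointwise multiplier λ, `ξ` the scalar
multiplier, and `f n` plays the role of `L_h^n ũ^{n+1}`, with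
`[f^n, 1] = 0` encoding that the bilinear form annihilates constants. -/
theorem first_order_mass_conserving_stability
    {S : Type*} [Fintype S] [Nonempty S] (w : S → ℝ) (hw : ∀ z, 0 < w z)
    (δt : ℝ) (hδt : 0 < δt)
    (u ut lam f : ℕ → S → ℝ) (ξ : ℕ → ℝ)
    (hstep1 : ∀ n z, (ut (n + 1) z - u n z) / δt + f n z = 0)
    (hstep2 : ∀ n z, (u (n + 1) z - ut (n + 1) z) / δt = lam (n + 1) z + ξ (n + 1))
    (hKKT : ∀ n z, 0 ≤ lam (n + 1) z ∧ 0 ≤ u (n + 1) z ∧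
      lam (n + 1) z * u (n + 1) z = 0)
    (hmass : ∀ n, (∑ z, w z * u (n + 1) z * 1) = ∑ z, w z * u n z * 1)
    (hf1 : ∀ n, (∑ z, w z * f n z * 1) = 0)
    (m : ℕ) (hm : 1 ≤ m) :
    (∑ z, w z * u m z * u m z)
      + (∑ n ∈ Finset.range m,
          ((∑ z, w z * (ut (n + 1) z - u n z) * (ut (n + 1) z - u n z))
            + δt ^ 2 * ∑ z, w z * (lam (n + 1) z + ξ (n + 1)) * (lam (n + 1) z + ξ (n + 1))))
      + 2 * δt * (∑ n ∈ Finset.range m, ∑ z, w z * f n z * ut (n + 1) z)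
    ≤ ∑ z, w z * u 0 z * u 0 z := by
  have hw₀ : 0 ≤ w := fun z => (hw z).le
  have hlam (n : ℕ) : 0 ≤ lam (n + 1) := fun z => (hKKT n z).1
  have hu (n : ℕ) : 0 ≤ u (n + 1) := fun z => (hKKT n z).2.1
  have hcompl (n : ℕ) : lam (n + 1) * u (n + 1) = 0 := funext fun z => (hKKT n z).2.2
  have hpred (n : ℕ) : δt⁻¹ • (ut (n + 1) - u n) + f n = 0 :=
    funext fun z => by simpa [div_eq_inv_mul] using hstep1 n z
  have hcorr (n : ℕ) : δt⁻¹ • (u (n + 1) - ut (n + 1)) = lam (n + 1) + ξ (n + 1) • 1 :=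
    funext fun z => by simpa [div_eq_inv_mul] using hstep2 n z
  simpa only [weightedDotProduct_apply, Pi.add_apply, Pi.sub_apply, Pi.smul_apply, Pi.one_apply,
      smul_eq_mul, mul_one] using
    first_order_mass_conserving_stability_general (weightedDotProduct_isSymm w)
      (weightedDotProduct_one_one_pos hw) hδt hpred hcorr
      (fun n => weightedDotProduct_nonneg hw₀ (hlam n) zero_le_one)
      (fun n => weightedDotProduct_nonneg hw₀ (hu n) zero_le_one)
      (fun n => weightedDotProduct_eq_zero_of_mul_eq_zero w (hcompl n)) hmass hf1 m
end

section
/- Let δt > 0 and let u, ũ, λ, f : S → ℝ be such that for every z ∈ S: (ũ(z) − u(z))/δt + f(z) = 0 (prediction), (u'(z) − ũ(z))/δt = λ(z) (correction) for some u' : S → ℝ with λ(z) ≥ 0, and suppose [f, 1] = 0. Then [u', 1] = [u, 1] + δt·[λ, 1], and since λ ≥ 0 pointwise and the weights are positive, [u', 1] ≥ [u, 1]. In particular, the first-order positivity-preserving scheme without the scalar multiplier does not conserve mass: the discrete mass [u^n, 1] is nondecreasing in n. -/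
open Finset

section PredictorCorrector

variable {K M N : Type*} [DivisionRing K] [AddCommGroup M] [Module K M]
  [AddCommGroup N] [Module K N] {δt : K} {u ut u' lam f : M}

theorem corrected_eq_add_smul_sub_smul (hδt : δt ≠ 0) (hpred : δt⁻¹ • (ut - u) + f = 0)
    (hcorr : δt⁻¹ • (u' - ut) = lam) : u' = u + δt • lam - δt • f := by
  have hpredictor : ut - u = δt • -f :=
    (inv_smul_eq_iff₀ hδt).mp (eq_neg_of_add_eq_zero_left hpred)
  have hcorrection : u' - ut = δt • lam := (inv_smul_eq_iff₀ hδt).mp hcorr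
  calc
    u' = u + (u' - ut) + (ut - u) := by abel
    _ = u + δt • lam - δt • f := by rw [hcorrection, hpredictor, smul_neg, sub_eq_add_neg]

theorem map_corrected_eq_add_smul (φ : M →ₗ[K] N) (hδt : δt ≠ 0)
    (hpred : δt⁻¹ • (ut - u) + f = 0) (hcorr : δt⁻¹ • (u' - ut) = lam) (hf : φ f = 0) :
    φ u' = φ u + δt • φ lam := by
  rw [corrected_eq_add_smul_sub_smul hδt hpred hcorr, map_sub, map_add, map_smul, map_smul, hf,
    smul_zero, sub_zero]

end PredictorCorrector

section DiscreteInner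

variable {S R : Type*} [Fintype S] [CommSemiring R]

/-- The discrete inner product `[u, v]` with quadrature weights `w`, encoded as a bilinear form so
that `[·, v]` is available as a linear functional. -/
def discreteInner (w : S → R) : LinearMap.BilinForm R (S → R) :=
  LinearMap.mk₂ R (fun u v => ∑ z, w z * u z * v z)
    (fun u₁ u₂ v => by simp only [Pi.add_apply, mul_add, add_mul, sum_add_distrib])
    (fun c u v => by
      simp only [Pi.smul_apply, smul_eq_mul, mul_sum, mul_assoc, mul_left_comm c])
    (fun u v₁ v₂ => by simp only [Pi.add_apply, mul_add, sum_add_distrib])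
    (fun c u v => by
      simp only [Pi.smul_apply, smul_eq_mul, mul_sum, mul_left_comm c])

theorem discreteInner_nonneg [PartialOrder R] [IsOrderedRing R] {w u v : S → R}
    (hw : 0 ≤ w) (hu : 0 ≤ u) (hv : 0 ≤ v) : 0 ≤ discreteInner w u v :=
  sum_nonneg fun z _ => mul_nonneg (mul_nonneg (hw z) (hu z)) (hv z)

end DiscreteInner

theorem scheme_without_mass_correction_increases_mass_general
    {S K : Type*} [Fintype S] [Field K] [LinearOrder K] [IsStrictOrderedRing K]
    {w v : S → K} (hw : 0 ≤ w) (hv : 0 ≤ v) {δt : K} (hδt : 0 < δt) {u ut u' lam f : S → K}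
    (hpred : ∀ z, (ut z - u z) / δt + f z = 0) (hcorr : ∀ z, (u' z - ut z) / δt = lam z)
    (hlam : 0 ≤ lam) (hf : discreteInner w f v = 0) :
    discreteInner w u' v = discreteInner w u v + δt * discreteInner w lam v ∧
    discreteInner w u v ≤ discreteInner w u' v := by
  have hpred_smul : δt⁻¹ • (ut - u) + f = 0 := by
    ext z
    simpa [div_eq_inv_mul] using hpred z
  have hcorr_smul : δt⁻¹ • (u' - ut) = lam := by
    ext z
    simpa [div_eq_inv_mul] using hcorr z
  have hbalance : discreteInner w u' v = discreteInner w u v + δt * discreteInner w lam v :=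
    map_corrected_eq_add_smul ((discreteInner w).flip v) hδt.ne' hpred_smul hcorr_smul hf
  refine ⟨hbalance, ?_⟩
  rw [hbalance]
  exact le_add_of_nonneg_right (mul_nonneg hδt.le (discreteInner_nonneg hw hlam hv))

/-- The first-order positivity-preserving scheme without the scalar multiplier
does not conserve mass: with `u` the solution at level `n`, `ut = ũ` the
predictor, `u'` the corrected solution at level `n+1`, `lam ≥ 0` the Lagrange
multiplier and `[f, 1] = 0`, one has `[u', 1] = [u, 1] + δt·[λ, 1]` and hence
`[u', 1] ≥ [u, 1]`: the discrete mass is nondecreasing. -/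
theorem scheme_without_mass_correction_increases_mass
    {S : Type*} [Fintype S] [Nonempty S] (w : S → ℝ) (hw : ∀ z, 0 < w z)
    (δt : ℝ) (hδt : 0 < δt)
    (u ut u' lam f : S → ℝ)
    (hstep1 : ∀ z, (ut z - u z) / δt + f z = 0)
    (hstep2 : ∀ z, (u' z - ut z) / δt = lam z)
    (hlam : ∀ z, 0 ≤ lam z)
    (hf1 : (∑ z, w z * f z * 1) = 0) :
    (∑ z, w z * u' z * 1) = (∑ z, w z * u z * 1) + δt * (∑ z, w z * lam z * 1) ∧
    (∑ z, w z * u z * 1) ≤ ∑ z, w z * u' z * 1 := by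
  exact scheme_without_mass_correction_increases_mass_general (fun z => (hw z).le)
    (v := 1) zero_le_one hδt hstep1 hstep2 hlam hf1
end

section
/- Let δt > 0 and ξ ∈ ℝ, and let u, ũ, λ : S → ℝ be such that for every z ∈ S one has u(z) − δt·(λ(z) + ξ) = ũ(z) and λ(z)·u(z) = 0. Then ‖u‖² + δt²‖λ + ξ‖² − 2δt·ξ·[u, 1] = ‖ũ‖², where ‖λ + ξ‖ is the norm of the function z ↦ λ(z) + ξ. Consequently, if moreover ξ ≤ 0 and u(z) ≥ 0 for all z, then ‖u‖² + δt²‖λ + ξ‖² ≤ ‖ũ‖². -/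
open Finset

section BilinearForm

variable {R M : Type*} [CommRing R] [AddCommGroup M] [Module R M]
  {B : LinearMap.BilinForm R M}

theorem bilinForm_sub_smul_self (hB : B.IsSymm) (t : R) (x y : M) :
    B (x - t • y) (x - t • y) = B x x + t ^ 2 * B y y - 2 * t * B x y := by
  simp only [map_sub, map_smul, LinearMap.sub_apply, LinearMap.smul_apply, smul_eq_mul,
    hB.eq y x]
  ring

theorem bilinForm_sub_smul_add_self_of_ortho (hB : B.IsSymm) (t : R) {x y : M}
    (hortho : B y x = 0) (c : M) :
    B (x - t • (y + c)) (x - t • (y + c)) =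
      B x x + t ^ 2 * B (y + c) (y + c) - 2 * t * B x c := by
  have hcross : B x (y + c) = B x c := by
    rw [map_add, hB.isRefl.eq_zero hortho, zero_add]
  rw [bilinForm_sub_smul_self hB, hcross]

end BilinearForm

theorem bilinForm_algebraMap_right {R A : Type*} [CommSemiring R] [Semiring A] [Algebra R A]
    (B : LinearMap.BilinForm R A) (u : A) (ξ : R) : B u (algebraMap R A ξ) = ξ * B u 1 := by
  rw [Algebra.algebraMap_eq_smul_one, map_smul, smul_eq_mul]

theorem mass_correction_step_identity_general {R A : Type*} [CommRing R] [PartialOrder R]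
    [IsOrderedRing R] [Ring A] [Algebra R A] {B : LinearMap.BilinForm R A} (hB : B.IsSymm)
    {δt : R} (hδt : 0 ≤ δt) (ξ : R) {u ut lam : A}
    (hstep : u - δt • (lam + algebraMap R A ξ) = ut) (hortho : B lam u = 0) :
    (B u u + δt ^ 2 * B (lam + algebraMap R A ξ) (lam + algebraMap R A ξ)
        - 2 * δt * ξ * B u 1
      = B ut ut) ∧
    (ξ ≤ 0 → 0 ≤ B u 1 →
      B u u + δt ^ 2 * B (lam + algebraMap R A ξ) (lam + algebraMap R A ξ) ≤ B ut ut) := by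
  have identity : B u u + δt ^ 2 * B (lam + algebraMap R A ξ) (lam + algebraMap R A ξ)
      - 2 * δt * ξ * B u 1 = B ut ut := by
    rw [← hstep, bilinForm_sub_smul_add_self_of_ortho hB δt hortho,
      bilinForm_algebraMap_right, ← mul_assoc]
  refine ⟨identity, fun hξ hmass => ?_⟩
  have correction_nonpos : 2 * δt * ξ * B u 1 ≤ 0 :=
    mul_nonpos_of_nonpos_of_nonneg
      (mul_nonpos_of_nonneg_of_nonpos (mul_nonneg zero_le_two hδt) hξ) hmass
  rw [← identity]
  exact (le_sub_self_iff _).mpr correction_nonpos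

section WeightedBilinForm

variable {S R : Type*} [Fintype S] [CommSemiring R]

/-- The discrete inner product `[u, v] = ∑ z, w z * u z * v z` with weights `w`, as a bilinear
form, encoded as the dot product of `w * u` with `v`. -/
def weightedBilinForm (w : S → R) : LinearMap.BilinForm R (S → R) :=
  (dotProductBilin R R).comp (LinearMap.mulLeft R w)

theorem weightedBilinForm_apply (w u v : S → R) :
    weightedBilinForm w u v = ∑ z, w z * u z * v z :=
  rfl

theorem weightedBilinForm_isSymm (w : S → R) : (weightedBilinForm w).IsSymm where
  eq u v := by simp only [weightedBilinForm_apply, mul_right_comm]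

theorem weightedBilinForm_eq_zero_of_mul_eq_zero (w : S → R) {u v : S → R}
    (huv : ∀ z, u z * v z = 0) : weightedBilinForm w u v = 0 := by
  simp only [weightedBilinForm_apply, mul_assoc, huv, mul_zero, sum_const_zero]

theorem weightedBilinForm_nonneg [PartialOrder R] [IsOrderedRing R] {w u v : S → R}
    (hw : 0 ≤ w) (hu : 0 ≤ u) (hv : 0 ≤ v) : 0 ≤ weightedBilinForm w u v :=
  dotProduct_nonneg_of_nonneg (mul_nonneg hw hu) hv

end WeightedBilinForm

/-- Single-step identity (and resulting inequality) in the proof of Theorem 3.2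
for the mass-conserving first-order positivity-preserving scheme: if
`u − δt·(λ + ξ) = ũ` pointwise and `λ·u = 0`, then
`‖u‖² + δt²‖λ + ξ‖² − 2δt·ξ·[u, 1] = ‖ũ‖²`; consequently, if `ξ ≤ 0` and
`u ≥ 0` pointwise, then `‖u‖² + δt²‖λ + ξ‖² ≤ ‖ũ‖²`. -/
theorem mass_correction_step_identity
    {S : Type*} [Fintype S] [Nonempty S] (w : S → ℝ) (hw : ∀ z, 0 < w z)
    (δt : ℝ) (hδt : 0 < δt) (ξ : ℝ)
    (u ut lam : S → ℝ)
    (hstep : ∀ z, u z - δt * (lam z + ξ) = ut z)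
    (hcomp : ∀ z, lam z * u z = 0) :
    ((∑ z, w z * u z * u z)
        + δt ^ 2 * (∑ z, w z * (lam z + ξ) * (lam z + ξ))
        - 2 * δt * ξ * (∑ z, w z * u z * 1)
      = ∑ z, w z * ut z * ut z) ∧
    (ξ ≤ 0 → (∀ z, 0 ≤ u z) →
      (∑ z, w z * u z * u z)
          + δt ^ 2 * (∑ z, w z * (lam z + ξ) * (lam z + ξ))
        ≤ ∑ z, w z * ut z * ut z) := by
  have hmass (hu : ∀ z, 0 ≤ u z) : 0 ≤ weightedBilinForm w u 1 :=
    weightedBilinForm_nonneg (fun z => (hw z).le) hu zero_le_one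
  -- The sums unfold from `weightedBilinForm w`, and `algebraMap ℝ (S → ℝ) ξ` is the constant `ξ`.
  exact (mass_correction_step_identity_general (weightedBilinForm_isSymm w) hδt.le ξ
    (funext hstep) (weightedBilinForm_eq_zero_of_mul_eq_zero w hcomp)).imp_right
      fun h hξ hu => h hξ (hmass hu)
end
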